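/- For i = 1, 2, let C_i be an entropy space with entropy function h_i and λ_i : C_i → C_i a map such that λ_2 is monotone. If μ : C_1 → C_2 is a cofinal lower connection from λ_1 to λ_2, then h_1(λ_1) ≥ h_2(λ_2). -/

import Mathlib

open Filter ENNReal Topology

/-- An *entropy space*: a pre-ordered semigroup `(C, ≺, ∧)` satisfying (C1) and (C2),
together with an entropy function `h : C → [0,∞]` satisfying (H1) and (H2). -/
structure EntropySpace (C : Type*) where
  prec : C → C → Prop
  meet : C → C → C
  h : C → ℝ≥0∞
  prec_refl : ∀ a, prec a a
  prec_trans : ∀ a b c, prec a b → prec b c → prec a c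
  meet_assoc : ∀ a b c, meet (meet a b) c = meet a (meet b c)
  c1_left : ∀ a b, prec (meet a b) a
  c1_right : ∀ a b, prec (meet a b) b
  c2 : ∀ a a' b b', prec a a' → prec b b' → prec (meet a b) (meet a' b')
  h1 : ∀ a b, prec a b → h b ≤ h a
  h2 : ∀ a b, h (meet a b) ≤ h a + h b

variable {C : Type*}

/-- `α_0^n[λ] = α ∧ λα ∧ ⋯ ∧ λ^n α` (a product of `n + 1` factors). -/
def EntropySpace.orbitProd (E : EntropySpace C) (l : C → C) (a : C) : ℕ → C
  | 0 => a
  | n + 1 => E.meet (E.orbitProd l a n) (l^[n + 1] a)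

/-- `h(λ, α) = limsup_{n → ∞} (1/n) · h(α_0^{n-1}[λ])`, computed in `[0,∞]`. -/
noncomputable def EntropySpace.relEntropy (E : EntropySpace C) (l : C → C) (a : C) : ℝ≥0∞ :=
  Filter.atTop.limsup fun n : ℕ => E.h (E.orbitProd l a n) / ((n : ℝ≥0∞) + 1)

/-- `h(λ) = sup_{α ∈ C} h(λ, α)`. -/
noncomputable def EntropySpace.entropy (E : EntropySpace C) (l : C → C) : ℝ≥0∞ :=
  ⨆ a : C, E.relEntropy l a

/-!
Monotonicity of `l₂` makes relative entropy antitone: finer elements of `C₂` have larger relative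
entropy, so the supremum defining the entropy of `l₂` may be taken over the cofinal image of `μ`.
On that image, `μ` carries the orbit product of `b` below the orbit product of `μ b`, whence
`h(l₂, μ b) ≤ h(l₁, b)`.
-/

namespace EntropySpace

/-- The preorder `≺` of an entropy space as a Mathlib preorder, with `a ≤ b` meaning `a ≺ b`; it
makes the lemmas on iterates of monotone maps available. It is not an instance because a type may
carry several entropy space structures. -/
abbrev toPreorder (E : EntropySpace C) : Preorder C where
  le := E.prec
  le_refl := E.prec_refl
  le_trans := E.prec_trans

theorem relEntropy_le_relEntropy_of_h_orbitProd_le {C₁ C₂ : Type*}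
    {E₁ : EntropySpace C₁} {E₂ : EntropySpace C₂}
    {l₁ : C₁ → C₁} {l₂ : C₂ → C₂} {a₁ : C₁} {a₂ : C₂}
    (horbit : ∀ n, E₁.h (E₁.orbitProd l₁ a₁ n) ≤ E₂.h (E₂.orbitProd l₂ a₂ n)) :
    E₁.relEntropy l₁ a₁ ≤ E₂.relEntropy l₂ a₂ :=
  limsup_le_limsup <| .of_forall fun n => ENNReal.div_le_div_right (horbit n) _

section Monotone

variable {E : EntropySpace C} {l : C → C} {a b : C}

theorem iterate_prec_iterate (hl : ∀ x y, E.prec x y → E.prec (l x) (l y))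
    (hab : E.prec a b) (n : ℕ) : E.prec (l^[n] a) (l^[n] b) :=
  letI := E.toPreorder
  Monotone.iterate (fun x y => hl x y) n hab

theorem orbitProd_prec_orbitProd (hl : ∀ x y, E.prec x y → E.prec (l x) (l y))
    (hab : E.prec a b) (n : ℕ) : E.prec (E.orbitProd l a n) (E.orbitProd l b n) := by
  induction n with
  | zero => exact hab
  | succ n ih => exact E.c2 _ _ _ _ ih (iterate_prec_iterate hl hab (n + 1))

theorem relEntropy_le_relEntropy_of_prec (hl : ∀ x y, E.prec x y → E.prec (l x) (l y))
    (hab : E.prec a b) : E.relEntropy l b ≤ E.relEntropy l a :=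
  relEntropy_le_relEntropy_of_h_orbitProd_le fun n => E.h1 _ _ (orbitProd_prec_orbitProd hl hab n)

end Monotone

section LowerConnection

variable {C₁ C₂ : Type*} {E₁ : EntropySpace C₁} {E₂ : EntropySpace C₂}
  {l₁ : C₁ → C₁} {l₂ : C₂ → C₂} {μ : C₁ → C₂}

theorem map_iterate_prec (hl₂ : ∀ a b, E₂.prec a b → E₂.prec (l₂ a) (l₂ b))
    (hμl : ∀ a, E₂.prec (μ (l₁ a)) (l₂ (μ a))) (a : C₁) (n : ℕ) :
    E₂.prec (μ (l₁^[n] a)) (l₂^[n] (μ a)) :=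
  letI := E₂.toPreorder
  Monotone.le_iterate_comp_of_le (fun x y => hl₂ x y) hμl n a

theorem map_orbitProd_prec (hl₂ : ∀ a b, E₂.prec a b → E₂.prec (l₂ a) (l₂ b))
    (hμmeet : ∀ a b, E₂.prec (μ (E₁.meet a b)) (E₂.meet (μ a) (μ b)))
    (hμl : ∀ a, E₂.prec (μ (l₁ a)) (l₂ (μ a))) (a : C₁) (n : ℕ) :
    E₂.prec (μ (E₁.orbitProd l₁ a n)) (E₂.orbitProd l₂ (μ a) n) := by
  induction n with
  | zero => exact E₂.prec_refl _
  | succ n ih =>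
    exact E₂.prec_trans _ _ _ (hμmeet _ _)
      (E₂.c2 _ _ _ _ ih (map_iterate_prec hl₂ hμl a (n + 1)))

theorem relEntropy_map_le (hl₂ : ∀ a b, E₂.prec a b → E₂.prec (l₂ a) (l₂ b))
    (hμmeet : ∀ a b, E₂.prec (μ (E₁.meet a b)) (E₂.meet (μ a) (μ b)))
    (hμh : ∀ a, E₂.h (μ a) ≤ E₁.h a)
    (hμl : ∀ a, E₂.prec (μ (l₁ a)) (l₂ (μ a))) (a : C₁) :
    E₂.relEntropy l₂ (μ a) ≤ E₁.relEntropy l₁ a :=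
  relEntropy_le_relEntropy_of_h_orbitProd_le fun n =>
    (E₂.h1 _ _ (map_orbitProd_prec hl₂ hμmeet hμl a n)).trans (hμh _)

end LowerConnection

end EntropySpace

theorem stmt_9_general {C₁ C₂ : Type*} (E₁ : EntropySpace C₁) (E₂ : EntropySpace C₂)
    (l₁ : C₁ → C₁) (l₂ : C₂ → C₂)
    (hmono₂ : ∀ a b, E₂.prec a b → E₂.prec (l₂ a) (l₂ b))
    (μ : C₁ → C₂)
    (hl1 : ∀ a b, E₂.prec (μ (E₁.meet a b)) (E₂.meet (μ a) (μ b)))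
    (hl2 : ∀ a, E₂.h (μ a) ≤ E₁.h a)
    (hl3 : ∀ a, E₂.prec (μ (l₁ a)) (l₂ (μ a)))
    (hcof : ∀ a : C₂, ∃ b : C₁, E₂.prec (μ b) a) :
    E₂.entropy l₂ ≤ E₁.entropy l₁ := by
  refine iSup_mono' fun a => ?_
  obtain ⟨b, hba⟩ := hcof a
  use b
  calc
    E₂.relEntropy l₂ a ≤ E₂.relEntropy l₂ (μ b) :=
      EntropySpace.relEntropy_le_relEntropy_of_prec hmono₂ hba
    _ ≤ E₁.relEntropy l₁ b := EntropySpace.relEntropy_map_le hmono₂ hl1 hl2 hl3 b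

/-- If `μ : λ₁ → λ₂` is a cofinal lower connection and `λ₂` is monotone,
then `h(λ₁) ≥ h(λ₂)`. -/
theorem stmt_9 {C₁ C₂ : Type*} (E₁ : EntropySpace C₁) (E₂ : EntropySpace C₂)
    (l₁ : C₁ → C₁) (l₂ : C₂ → C₂)
    (hmono₂ : ∀ a b, E₂.prec a b → E₂.prec (l₂ a) (l₂ b))
    (μ : C₁ → C₂)
    (hμmono : ∀ a b, E₁.prec a b → E₂.prec (μ a) (μ b))
    (hl1 : ∀ a b, E₂.prec (μ (E₁.meet a b)) (E₂.meet (μ a) (μ b)))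
    (hl2 : ∀ a, E₂.h (μ a) ≤ E₁.h a)
    (hl3 : ∀ a, E₂.prec (μ (l₁ a)) (l₂ (μ a)))
    (hcof : ∀ a : C₂, ∃ b : C₁, E₂.prec (μ b) a) :
    E₂.entropy l₂ ≤ E₁.entropy l₁ :=
  stmt_9_general E₁ E₂ l₁ l₂ hmono₂ μ hl1 hl2 hl3 hcof
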